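/- arXiv:2007.14088 — 3 statements merged into one kernel-verified Lean document; each statement's English description precedes it below -/
import Mathlib

section
/- Let F be a finite field of characteristic 2 with q = 2^n elements, and let G be the cyclic group C_32 of order 32. Then the unit group of the group algebra FG is isomorphic to C_32^n × C_16^n × C_8^{2n} × C_4^{4n} × C_2^{8n} × C_{2^n - 1}. -/
/-- The cyclic group of order `m`, realized as `Multiplicative (ZMod m)`. -/
abbrev C (m : ℕ) : Type := Multiplicative (ZMod m)

/-!
Let `G` be a finite abelian `p`-group and `F` a field with `p ^ n` elements. The units of `F[G]`
are the product of `Fˣ` and the group `V` of units of augmentation `1`, an abelian `p`-group. By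
additivity of Frobenius, `u ^ p ^ k = 1` exactly when `(u - 1) ^ p ^ k = 0`, and raising to the
power `p ^ k` acts on `F[G]` as an injective coefficient map composed with the surjection
`F[G] → F[G ^ p ^ k]`. This gives the order of the `p ^ k`-torsion of `V` for every `k`, and these
orders determine `V` up to isomorphism.
-/

theorem natCard_ker_pow_congr {A B : Type*} [CommGroup A] [CommGroup B] (e : A ≃* B) (d : ℕ) :
    Nat.card (powMonoidHom d : A →* A).ker = Nat.card (powMonoidHom d : B →* B).ker :=
  Nat.card_congr <| e.toEquiv.subtypeEquiv fun a => by
    simp [MonoidHom.mem_ker, ← map_pow]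

theorem natCard_ker_pow_pi {ι : Type*} [Fintype ι] (A : ι → Type*) [∀ i, CommGroup (A i)] (d : ℕ) :
    Nat.card (powMonoidHom d : (∀ i, A i) →* ∀ i, A i).ker =
      ∏ i, Nat.card (powMonoidHom d : A i →* A i).ker := by
  rw [← Nat.card_pi]
  exact Nat.card_congr <| (Equiv.subtypeEquivRight fun _ => funext_iff).trans
    (Equiv.subtypePiEquivPi (p := fun _ a => a ^ d = 1))

theorem natCard_ker_pow_subgroup {A : Type*} [CommGroup A] (V : Subgroup A) (d : ℕ)
    (hV : (powMonoidHom d : A →* A).ker ≤ V) :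
    Nat.card (powMonoidHom d : V →* V).ker = Nat.card (powMonoidHom d : A →* A).ker := by
  have hker : (powMonoidHom d : V →* V).ker = (powMonoidHom d : A →* A).ker.subgroupOf V := by
    ext v
    simp [MonoidHom.mem_ker, Subgroup.mem_subgroupOf, Subtype.ext_iff]
  rw [hker]
  exact Nat.card_congr (Subgroup.subgroupOfEquivOfLe hV).toEquiv

theorem natCard_ker_pow_C (m : ℕ) [NeZero m] (d : ℕ) :
    Nat.card (powMonoidHom d : C m →* C m).ker = m.gcd d := by
  rw [IsCyclic.card_powMonoidHom_ker, Nat.card_congr Multiplicative.toAdd, Nat.card_zmod]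

theorem gcd_pow_succ_pow_succ (p a k : ℕ) :
    (p ^ (a + 1)).gcd (p ^ (k + 1)) = p ^ (if k ≤ a then 1 else 0) * (p ^ (a + 1)).gcd (p ^ k) := by
  split_ifs with h
  · rw [Nat.gcd_eq_right (pow_dvd_pow p (by lia)), Nat.gcd_eq_right (pow_dvd_pow p (by lia)),
      pow_succ', pow_one]
  · rw [Nat.gcd_eq_left (pow_dvd_pow p (by lia)), Nat.gcd_eq_left (pow_dvd_pow p (by lia)),
      pow_zero, one_mul]

theorem natCard_ker_pow_succ_pi_C {p : ℕ} [NeZero p] {ι : Type*} [Fintype ι] (e : ι → ℕ) (k : ℕ) :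
    Nat.card (powMonoidHom (p ^ (k + 1)) : (∀ i, C (p ^ (e i + 1))) →* _).ker =
      p ^ Finset.card {i | k ≤ e i} *
        Nat.card (powMonoidHom (p ^ k) : (∀ i, C (p ^ (e i + 1))) →* _).ker := by
  simp only [natCard_ker_pow_pi, natCard_ker_pow_C, gcd_pow_succ_pow_succ,
    Finset.prod_mul_distrib, Finset.prod_pow_eq_pow_sum, Finset.sum_boole, Nat.cast_id]

section Structure

/-- Grouping the factors of a product of groups `M (f i)` according to the value `f i`. -/
def piFiberMulEquiv {ι κ : Type*} (f : ι → κ) (M : κ → Type*) [∀ k, Mul (M k)] :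
    (∀ k, {i // f i = k} → M k) ≃* ∀ i, M (f i) where
  toFun g i := g (f i) ⟨i, rfl⟩
  invFun h _ i := i.2 ▸ h i.1
  left_inv g := by
    ext k ⟨i, rfl⟩
    rfl
  right_inv _ := rfl
  map_mul' _ _ := rfl

/-- Replacing the numbers of copies in a product of powers `M k ^ μ k` by equal numbers. -/
def piFinArrowMulEquivOfEq {κ : Type*} (M : κ → Type*) [∀ k, Mul (M k)] {μ ν : κ → ℕ}
    (h : ∀ k, μ k = ν k) : (∀ k, Fin (μ k) → M k) ≃* ∀ k, Fin (ν k) → M k :=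
  .piCongrRight fun k => .arrowCongr (finCongr (h k)) (.refl _)

variable {p : ℕ} [Fact p.Prime] {A : Type*} [CommGroup A] [Finite A] {m : ℕ}

theorem exists_mulEquiv_pi_C_of_pow_eq_one (hA : ∀ a : A, a ^ p ^ m = 1) :
    ∃ (ι : Type) (_ : Fintype ι) (e : ι → Fin m),
      Nonempty (A ≃* ∀ i, C (p ^ ((e i : ℕ) + 1))) := by
  obtain ⟨ι, _, q, hq, ⟨f⟩⟩ := CommGroup.equiv_prod_multiplicative_zmod_of_finite A
  have q_dvd (i : ι) : q i ∣ p ^ m := by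
    have generator_pow : (fun i => .ofAdd 1 : ∀ i, C (q i)) ^ p ^ m = 1 := by
      rw [← f.apply_symm_apply (fun i => .ofAdd 1), ← map_pow, hA, map_one]
    have : p ^ m • (1 : ZMod (q i)) = 0 := congrArg Multiplicative.toAdd (congrFun generator_pow i)
    rwa [nsmul_one, ZMod.natCast_eq_zero_iff] at this
  have q_eq (i : ι) : ∃ e : Fin m, q i = p ^ ((e : ℕ) + 1) := by
    obtain ⟨a, ha, hqa⟩ := (Nat.dvd_prime_pow Fact.out).1 (q_dvd i)
    obtain _ | a := a
    · exact absurd (hq i) (by simp [hqa])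
    · exact ⟨⟨a, ha⟩, hqa⟩
  choose e he using q_eq
  obtain rfl : q = fun i => p ^ ((e i : ℕ) + 1) := funext he
  exact ⟨ι, inferInstance, e, ⟨f⟩⟩

/-- Here `r k` is the number of cyclic factors of order at least `p ^ (k + 1)`, so that the
subtraction does not truncate. -/
theorem nonempty_mulEquiv_pi_C_of_natCard_ker_pow (hA : ∀ a : A, a ^ p ^ m = 1) (r : ℕ → ℕ)
    (hr : ∀ k, Nat.card (powMonoidHom (p ^ (k + 1)) : A →* A).ker =
      p ^ r k * Nat.card (powMonoidHom (p ^ k) : A →* A).ker) :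
    Nonempty (A ≃* ((j : Fin m) → Fin (r j - r (j + 1)) → C (p ^ ((j : ℕ) + 1)))) := by
  classical
  obtain ⟨ι, _, e, ⟨f⟩⟩ := exists_mulEquiv_pi_C_of_pow_eq_one hA
  have card_le (k : ℕ) : Finset.card {i | k ≤ e i} = r k := by
    have h := hr k
    rw [natCard_ker_pow_congr f, natCard_ker_pow_congr f, natCard_ker_pow_succ_pi_C] at h
    exact Nat.pow_right_injective (Fact.out : p.Prime).two_le
      (Nat.eq_of_mul_eq_mul_right Nat.card_pos h)
  have card_fiber (j : Fin m) : Fintype.card {i // e i = j} = r j - r (j + 1) := by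
    rw [← card_le, ← card_le, ← Finset.card_sdiff_of_subset, Fintype.card_subtype]
    · congr 1
      ext i
      simp only [Finset.mem_filter, Finset.mem_univ, Finset.mem_sdiff, Fin.ext_iff]
      lia
    · intro i
      simp only [Finset.mem_filter, Finset.mem_univ]
      lia
  exact ⟨f.trans <| (piFiberMulEquiv e fun j => C (p ^ ((j : ℕ) + 1))).symm.trans <|
    .piCongrRight fun j => .arrowCongr (Fintype.equivFinOfCardEq (card_fiber j)) (.refl _)⟩

end Structure

section Frobenius

open MonoidAlgebra

theorem natCard_monoidAlgebra (R M : Type*) [Semiring R] [Finite M] :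
    Nat.card (MonoidAlgebra R M) = Nat.card R ^ Nat.card M := by
  rw [Nat.card_congr (coeffEquiv.trans Finsupp.equivFunOnFinite), Nat.card_fun]

theorem monoidAlgebra_mapDomain_surjective {R M N : Type*} [Semiring R] {f : M → N}
    (hf : Function.Surjective f) : Function.Surjective (mapDomain (R := R) f) := fun y => by
  obtain ⟨x, hx⟩ := Finsupp.mapDomain_surjective hf y.coeff
  exact ⟨.ofCoeff x, coeff_injective hx⟩

theorem expChar_monoidAlgebra (p : ℕ) (R M : Type*) [CommSemiring R] [ExpChar R p] [CommMonoid M] :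
    ExpChar (MonoidAlgebra R M) p :=
  expChar_of_injective_ringHom (f := singleOneRingHom) single_right_injective p

theorem pow_expChar_pow_eq_map_mapDomain (p : ℕ) {R M : Type*} [CommSemiring R] [ExpChar R p]
    [CommMonoid M] (k : ℕ) (y : MonoidAlgebra R M) :
    y ^ p ^ k = map (iterateFrobenius R p k : R →+ R) (mapDomain (· ^ p ^ k) y) := by
  have := expChar_monoidAlgebra p R M
  induction y using MonoidAlgebra.induction_linear with
  | zero => simp [(expChar_pos R p).ne']
  | add x y hx hy => rw [add_pow_expChar_pow, hx, hy, mapDomain_add, MonoidAlgebra.map_add]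
  | single g r => simp [single_pow, iterateFrobenius_def]

theorem pow_expChar_pow_eq_zero_iff {p : ℕ} {R G : Type*} [CommRing R] [IsReduced R] [ExpChar R p]
    [CommGroup G] (k : ℕ) (y : MonoidAlgebra R G) :
    y ^ p ^ k = 0 ↔ mapDomain (powMonoidHom (p ^ k) : G →* G).rangeRestrict y = 0 := by
  have mapDomain_pow : mapDomain (· ^ p ^ k) y =
      mapDomain Subtype.val (mapDomain (powMonoidHom (p ^ k) : G →* G).rangeRestrict y) :=
    coeff_injective <| Finsupp.mapDomain_comp
      (f := (powMonoidHom (p ^ k) : G →* G).rangeRestrict) (g := Subtype.val)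
  have map_inj := map_injective (M := G) (iterateFrobenius R p k : R →+ R)
    (iterateFrobenius_inj R p k)
  have mapDomain_inj := mapDomain_injective (R := R)
    (Subtype.val_injective (p := (· ∈ (powMonoidHom (p ^ k) : G →* G).range)))
  rw [pow_expChar_pow_eq_map_mapDomain, map_inj.eq_iff' (MonoidAlgebra.map_zero _), mapDomain_pow,
    mapDomain_inj.eq_iff' (mapDomain_zero _)]

theorem natCard_pow_expChar_pow_eq_zero (p : ℕ) (R G : Type*) [CommRing R] [IsReduced R]
    [ExpChar R p] [CommGroup G] [Finite G] (k : ℕ) :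
    Nat.card {y : MonoidAlgebra R G // y ^ p ^ k = 0} *
      Nat.card R ^ Nat.card (powMonoidHom (p ^ k) : G →* G).range = Nat.card R ^ Nat.card G := by
  let φ := (powMonoidHom (p ^ k) : G →* G).rangeRestrict
  let T : MonoidAlgebra R G →+ MonoidAlgebra R (powMonoidHom (p ^ k) : G →* G).range :=
    mapDomainRingHom R φ
  have range_T : T.range = ⊤ := AddMonoidHom.range_eq_top.2 <|
    monoidAlgebra_mapDomain_surjective (MonoidHom.rangeRestrict_surjective _)
  have card_T := AddSubgroup.card_mul_index T.ker
  rw [AddSubgroup.index_ker, range_T, AddSubgroup.card_top] at card_T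
  rw [← natCard_monoidAlgebra, ← natCard_monoidAlgebra, ← card_T,
    Nat.card_congr (Equiv.subtypeEquivRight (pow_expChar_pow_eq_zero_iff k))]
  rfl

end Frobenius

theorem natCard_ker_pow_units {p : ℕ} (A : Type*) [CommRing A] [ExpChar A p] (k : ℕ) :
    Nat.card (powMonoidHom (p ^ k) : Aˣ →* Aˣ).ker = Nat.card {y : A // y ^ p ^ k = 0} := by
  have hp : p ^ k ≠ 0 := (expChar_pow_pos A p k).ne'
  have add_one_pow (y : A) (hy : y ^ p ^ k = 0) : (y + 1) ^ p ^ k = 1 := by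
    rw [add_pow_expChar_pow, hy, one_pow, zero_add]
  have sub_one_pow (u : Aˣ) (hu : u ^ p ^ k = 1) : (u - 1 : A) ^ p ^ k = 0 := by
    rw [sub_pow_expChar_pow, ← Units.val_pow_eq_pow_val, hu, Units.val_one, one_pow, sub_self]
  exact Nat.card_congr
    { toFun u := ⟨(u : Aˣ) - 1, sub_one_pow u.1 (MonoidHom.mem_ker.1 u.2)⟩
      invFun y := ⟨.ofPowEqOne (y + 1) (p ^ k) (add_one_pow y y.2) hp, Units.pow_ofPowEqOne _ hp⟩
      left_inv _ := Subtype.ext <| Units.ext <| sub_add_cancel _ (1 : A)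
      right_inv _ := Subtype.ext <| add_sub_cancel_right _ (1 : A) }

/-- A homomorphism of abelian groups with a section splits off its kernel. -/
def kerProdMulEquiv {A B : Type*} [CommGroup A] [CommGroup B] (f : A →* B) (s : B →* A)
    (hs : ∀ b, f (s b) = b) : f.ker × B ≃* A where
  toFun x := x.1 * s x.2
  invFun a := (⟨a * (s (f a))⁻¹, by simp [MonoidHom.mem_ker, hs]⟩, f a)
  left_inv := by
    rintro ⟨⟨a, ha⟩, b⟩
    simp [MonoidHom.mem_ker.1 ha, hs]
  right_inv a := by simp
  map_mul' x y := by simp [mul_mul_mul_comm]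

theorem nonempty_units_mulEquiv_C (F : Type*) [Field F] [Fintype F] :
    Nonempty (Fˣ ≃* C (Fintype.card F - 1)) := by
  classical
  exact ⟨mulEquivOfCyclicCardEq (by
    rw [Nat.card_eq_fintype_card, Fintype.card_units, Nat.card_congr Multiplicative.toAdd,
      Nat.card_zmod])⟩

/-- The augmentation `∑ a_g g ↦ ∑ a_g`. -/
noncomputable def augmentation (R M : Type*) [CommSemiring R] [Monoid M] :
    MonoidAlgebra R M →ₐ[R] R :=
  MonoidAlgebra.lift R R M 1

theorem pow_expChar_pow_eq_algebraMap {p : ℕ} {R M : Type*} [CommSemiring R] [ExpChar R p]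
    [CommMonoid M] {k : ℕ} (hM : ∀ g : M, g ^ p ^ k = 1) (y : MonoidAlgebra R M) :
    y ^ p ^ k = algebraMap R (MonoidAlgebra R M) (augmentation R M y ^ p ^ k) := by
  have := expChar_monoidAlgebra p R M
  induction y using MonoidAlgebra.induction_linear with
  | zero => simp [(expChar_pos R p).ne']
  | add x y hx hy => simp only [add_pow_expChar_pow, hx, hy, map_add]
  | single g r => simp [MonoidAlgebra.single_pow, hM, augmentation]

/-- The group `V(R[M])` of units of augmentation `1`. -/
noncomputable def normalizedUnits (R M : Type*) [CommSemiring R] [CommMonoid M] :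
    Subgroup (MonoidAlgebra R M)ˣ :=
  (Units.map (augmentation R M : MonoidAlgebra R M →* R)).ker

theorem mem_normalizedUnits {R M : Type*} [CommSemiring R] [CommMonoid M]
    {u : (MonoidAlgebra R M)ˣ} : u ∈ normalizedUnits R M ↔ augmentation R M u = 1 := by
  simp [normalizedUnits, MonoidHom.mem_ker, Units.ext_iff]

theorem normalizedUnits_pow_eq_one {p : ℕ} {R M : Type*} [CommSemiring R] [ExpChar R p]
    [CommMonoid M] {k : ℕ} (hM : ∀ g : M, g ^ p ^ k = 1) (v : normalizedUnits R M) :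
    v ^ p ^ k = 1 := by
  refine Subtype.ext <| Units.ext ?_
  rw [SubmonoidClass.coe_pow, Units.val_pow_eq_pow_val, pow_expChar_pow_eq_algebraMap hM,
    mem_normalizedUnits.1 v.2, one_pow, map_one]
  rfl

theorem ker_pow_le_normalizedUnits {p : ℕ} {R M : Type*} [CommRing R] [IsReduced R] [ExpChar R p]
    [CommMonoid M] (k : ℕ) :
    (powMonoidHom (p ^ k) : (MonoidAlgebra R M)ˣ →* _).ker ≤ normalizedUnits R M := by
  intro u hu
  have hu : (u : MonoidAlgebra R M) ^ p ^ k = 1 := congrArg Units.val hu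
  refine mem_normalizedUnits.2 <| iterateFrobenius_inj R p k ?_
  rw [iterateFrobenius_def, ← map_pow, hu, map_one, map_one]

/-- Units of a group algebra are normalized units times units of the coefficient ring. -/
noncomputable def normalizedUnitsProdMulEquiv (R M : Type*) [CommSemiring R] [CommMonoid M] :
    normalizedUnits R M × Rˣ ≃* (MonoidAlgebra R M)ˣ :=
  kerProdMulEquiv (Units.map (augmentation R M : MonoidAlgebra R M →* R))
    (Units.map (algebraMap R (MonoidAlgebra R M) : R →* MonoidAlgebra R M)) fun r =>
      Units.ext <| (augmentation R M).commutes r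

/-- The number of elements of `G` that are `p ^ k`-th powers but not `p ^ (k + 1)`-th powers. For a
finite abelian `p`-group `G` and a field with `p ^ n` elements, `n * strictPowCard p G k` is the
number of cyclic factors of order at least `p ^ (k + 1)` in the group of normalized units. -/
noncomputable def strictPowCard (p : ℕ) (G : Type*) [CommGroup G] (k : ℕ) : ℕ :=
  Nat.card (powMonoidHom (p ^ k) : G →* G).range -
    Nat.card (powMonoidHom (p ^ (k + 1)) : G →* G).range

theorem natCard_range_pow_eq_add_strictPowCard (p : ℕ) (G : Type*) [CommGroup G] [Finite G]
    (k : ℕ) :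
    Nat.card (powMonoidHom (p ^ k) : G →* G).range =
      strictPowCard p G k + Nat.card (powMonoidHom (p ^ (k + 1)) : G →* G).range := by
  refine (Nat.sub_add_cancel <| Subgroup.card_le_of_le ?_).symm
  rintro _ ⟨g, rfl⟩
  exact ⟨g ^ p, by simp [← pow_mul, pow_succ']⟩

theorem natCard_ker_pow_normalizedUnits {p : ℕ} {R M : Type*} [CommRing R] [IsReduced R]
    [ExpChar R p] [CommMonoid M] (k : ℕ) :
    Nat.card (powMonoidHom (p ^ k) : normalizedUnits R M →* _).ker =
      Nat.card {y : MonoidAlgebra R M // y ^ p ^ k = 0} := by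
  have := expChar_monoidAlgebra p R M
  rw [natCard_ker_pow_subgroup (normalizedUnits R M) _ (ker_pow_le_normalizedUnits k),
    natCard_ker_pow_units]

theorem natCard_ker_pow_succ_normalizedUnits {p : ℕ} {R G : Type*} [CommRing R] [Finite R]
    [IsReduced R] [ExpChar R p] [CommGroup G] [Finite G] (k : ℕ) :
    Nat.card (powMonoidHom (p ^ (k + 1)) : normalizedUnits R G →* _).ker =
      Nat.card R ^ strictPowCard p G k *
        Nat.card (powMonoidHom (p ^ k) : normalizedUnits R G →* _).ker := by
  have card_eq := (natCard_pow_expChar_pow_eq_zero p R G k).trans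
    (natCard_pow_expChar_pow_eq_zero p R G (k + 1)).symm
  rw [natCard_range_pow_eq_add_strictPowCard p G k, pow_add, ← mul_assoc,
    mul_comm (Nat.card _)] at card_eq
  rw [natCard_ker_pow_normalizedUnits, natCard_ker_pow_normalizedUnits]
  exact (Nat.eq_of_mul_eq_mul_right (pow_pos Nat.card_pos _) card_eq).symm

theorem nonempty_normalizedUnits_mulEquiv {p : ℕ} [Fact p.Prime] (F G : Type*) [Field F]
    [Fintype F] [CharP F p] [CommGroup G] [Finite G] {m n : ℕ} (hF : Fintype.card F = p ^ n)
    (hG : ∀ g : G, g ^ p ^ m = 1) :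
    Nonempty (normalizedUnits F G ≃* ((j : Fin m) →
      Fin (n * (strictPowCard p G j - strictPowCard p G (j + 1))) → C (p ^ ((j : ℕ) + 1)))) := by
  have : Finite (MonoidAlgebra F G) := Module.finite_of_finite F
  obtain ⟨e⟩ := nonempty_mulEquiv_pi_C_of_natCard_ker_pow
    (normalizedUnits_pow_eq_one (R := F) hG) (fun k => n * strictPowCard p G k) fun k => by
      rw [natCard_ker_pow_succ_normalizedUnits, Nat.card_eq_fintype_card, hF, pow_mul]
  exact ⟨e.trans <| piFinArrowMulEquivOfEq _ fun _ => (Nat.mul_sub ..).symm⟩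

theorem unit_group_stmt_0_general {p : ℕ} [Fact p.Prime] (F G : Type*) [Field F] [Fintype F]
    [CharP F p] [CommGroup G] [Finite G] {m n : ℕ} (hF : Fintype.card F = p ^ n)
    (hG : ∀ g : G, g ^ p ^ m = 1) :
    Nonempty ((MonoidAlgebra F G)ˣ ≃*
      ((j : Fin m) → Fin (n * (strictPowCard p G j - strictPowCard p G (j + 1))) →
        C (p ^ ((j : ℕ) + 1))) × C (p ^ n - 1)) := by
  obtain ⟨eV⟩ := nonempty_normalizedUnits_mulEquiv F G hF hG
  obtain ⟨eF⟩ := nonempty_units_mulEquiv_C F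
  rw [hF] at eF
  exact ⟨(normalizedUnitsProdMulEquiv F G).symm.trans (eV.prodCongr eF)⟩

/-- Listing the factors of a product over `Fin 5` in decreasing order. -/
def piFinFiveProdMulEquiv (M : Fin 5 → Type*) [∀ j, Mul (M j)] (N : Type*) [Mul N] :
    (∀ j, M j) × N ≃* M 4 × M 3 × M 2 × M 1 × M 0 × N where
  toFun x := (x.1 4, x.1 3, x.1 2, x.1 1, x.1 0, x.2)
  invFun y := (fun
    | 0 => y.2.2.2.2.1
    | 1 => y.2.2.2.1
    | 2 => y.2.2.1
    | 3 => y.2.1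
    | 4 => y.1, y.2.2.2.2.2)
  left_inv x := Prod.ext (by ext j; fin_cases j <;> rfl) rfl
  right_inv _ := rfl
  map_mul' _ _ := rfl

theorem natCard_range_pow_C (m : ℕ) [NeZero m] (d : ℕ) :
    Nat.card (powMonoidHom d : C m →* C m).range = m / m.gcd d := by
  rw [IsCyclic.card_powMonoidHom_range, Nat.card_congr Multiplicative.toAdd, Nat.card_zmod]

theorem mul_strictPowCard_sub_C_32 (n : ℕ) (j : Fin 5) :
    n * (strictPowCard 2 (C 32) j - strictPowCard 2 (C 32) (j + 1)) =
      ![8 * n, 4 * n, 2 * n, n, n] j := by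
  simp only [strictPowCard, natCard_range_pow_C]
  fin_cases j <;> norm_num [mul_comm]

theorem unit_group_stmt_0 (F : Type*) [Field F] [Fintype F] [CharP F 2]
    (n : ℕ) (hn : 0 < n) (hF : Fintype.card F = 2 ^ n) :
    Nonempty ((MonoidAlgebra F (C 32))ˣ ≃*
      ((Fin (n) → C 32) × (Fin (n) → C 16) × (Fin (2 * n) → C 8) × (Fin (4 * n) → C 4) × (Fin (8 * n) → C 2) × C (2 ^ n - 1))) := by
  obtain ⟨e⟩ := unit_group_stmt_0_general F (C 32) (m := 5) hF (by decide)
  exact ⟨e.trans <| ((piFinArrowMulEquivOfEq _ (mul_strictPowCard_sub_C_32 n)).prodCongr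
    (.refl _)).trans (piFinFiveProdMulEquiv _ _)⟩
end

section
/- Let F be a finite field of characteristic p > 2 with q = p^n elements, and let G be the cyclic group C_32 of order 32. Then the unit group U(FG) is isomorphic to: C_{p^n-1}^{32} if q ≡ 1 (mod 32); C_{p^n-1}^2 × C_{p^{2n}-1}^{15} if q ≡ -1 (mod 32); C_{p^{8n}-1}^2 × C_{p^{4n}-1}^2 × C_{p^{2n}-1}^3 × C_{p^n-1}^2 if q ≡ 3, -5, 11, or -13 (mod 32); C_{p^{8n}-1}^2 × C_{p^{4n}-1}^2 × C_{p^{2n}-1}^2 × C_{p^n-1}^4 if q ≡ -3, 5, -11, or 13 (mod 32); C_{p^n-1}^2 × C_{p^{4n}-1}^4 × C_{p^{2n}-1}^7 if q ≡ 7 (mod 32); C_{p^n-1}^8 × C_{p^{2n}-1}^4 × C_{p^{4n}-1}^4 if q ≡ -7 (mod 32); C_{p^n-1}^2 × C_{p^{2n}-1}^{15} if q ≡ 15 (mod 32); C_{p^n-1}^{16} × C_{p^{2n}-1}^8 if q ≡ -15 (mod 32). -/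
/-!
The group algebra of `C_m` over a field with `q` elements, `q` coprime to `m`, is
`F[X] / (X ^ m - 1)`, hence the product of the fields `F[X] / (g)` over the irreducible factors `g`
of `X ^ m - 1 = ∏_{e ∣ m} Φ_e`. Over `F` the polynomial `Φ_e` splits into `φ(e) / o` factors of
degree `o`, the order of `q` modulo `e`, and each factor of degree `d` contributes the cyclic group
of order `q ^ d - 1` to the units. So the residue of `q` modulo `m` determines the exponents `d`.
-/

section CyclicProducts

theorem card_fiber_eq_count {ι α : Type*} [Fintype ι] [DecidableEq α] (f : ι → α) (a : α) :
    Nat.card {i // f i = a} = (Finset.univ.val.map f).count a := by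
  rw [Multiset.count_map, Nat.card_eq_fintype_card, Fintype.card_subtype]
  simp only [eq_comm, Finset.card_def, Finset.filter_val]

theorem exists_equiv_of_map_univ_eq {ι κ α : Type*} [Fintype ι] [Fintype κ] {f : ι → α}
    {g : κ → α} (h : Finset.univ.val.map f = Finset.univ.val.map g) :
    ∃ e : ι ≃ κ, ∀ i, g (e i) = f i := by
  classical
  have fiberEquiv (a : α) : Nonempty ({i // f i = a} ≃ {k // g k = a}) :=
    Finite.card_eq.1 (by rw [card_fiber_eq_count, card_fiber_eq_count, h])
  exact ⟨Equiv.ofFiberEquiv fun a => (fiberEquiv a).some, fun i => Equiv.ofFiberEquiv_map _ i⟩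

theorem card_C (m : ℕ) : Nat.card (C m) = m :=
  Nat.card_zmod m

/-- `A` is a direct product of cyclic groups whose orders, with multiplicity, form `s`. -/
def IsProdOfCyclic (A : Type*) [Group A] (s : Multiset ℕ) : Prop :=
  Nonempty (A ≃* ∀ k : s, C k.1)

namespace IsProdOfCyclic

variable {A B : Type*} [Group A] [Group B] {s t : Multiset ℕ}

theorem nonempty_mulEquiv (hA : IsProdOfCyclic A s) (hB : IsProdOfCyclic B s) :
    Nonempty (A ≃* B) :=
  hA.map2 (fun e f => e.trans f.symm) hB

theorem of_mulEquiv (hA : IsProdOfCyclic A s) (e : B ≃* A) : IsProdOfCyclic B s :=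
  hA.map e.trans

theorem pi {ι : Type*} [Fintype ι] (G : ι → Type*) [∀ i, Group (G i)] [∀ i, IsCyclic (G i)] :
    IsProdOfCyclic (∀ i, G i) (Finset.univ.val.map fun i => Nat.card (G i)) := by
  set s := Finset.univ.val.map fun i => Nat.card (G i) with hs
  obtain ⟨e, he⟩ := exists_equiv_of_map_univ_eq
    (hs.symm.trans (Multiset.map_univ_coe s).symm)
  let reindex : (∀ k : s, C k.1) ≃* ∀ i, C (e i).1 :=
    { (Equiv.piCongrLeft (fun k : s => C k.1) e).symm with map_mul' := fun _ _ => rfl }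
  have card_eq (i : ι) : Nat.card (G i) = Nat.card (C (e i).1) :=
    (he i).symm.trans (card_C _).symm
  exact ⟨(MulEquiv.piCongrRight fun i => mulEquivOfCyclicCardEq (card_eq i)).trans reindex.symm⟩

theorem fin_arrow (a N : ℕ) : IsProdOfCyclic (Fin a → C N) (Multiset.replicate a N) := by
  simpa [card_C] using pi fun _ : Fin a => C N

theorem prod (hA : IsProdOfCyclic A s) (hB : IsProdOfCyclic B t) :
    IsProdOfCyclic (A × B) (s + t) := by
  obtain ⟨e⟩ := hA
  obtain ⟨f⟩ := hB
  let order : s ⊕ t → ℕ := Sum.elim (·.1) (·.1)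
  let split : (∀ i, C (order i)) ≃* (∀ k : s, C k.1) × (∀ k : t, C k.1) :=
    { Equiv.sumPiEquivProdPi fun i => C (order i) with map_mul' := fun _ _ => rfl }
  have orders : (Finset.univ.val.map fun i => Nat.card (C (order i))) = s + t := by
    simp [card_C, order, ← Finset.univ_disjSum_univ, Finset.val_disjSum, Multiset.disjSum]
  exact orders ▸ (pi fun i => C (order i)).of_mulEquiv ((e.prodCongr f).trans split.symm)

theorem units_pi {ι : Type*} [Fintype ι] (K : ι → Type*) [∀ i, Field (K i)] [∀ i, Finite (K i)] :
    IsProdOfCyclic (∀ i, K i)ˣ (Finset.univ.val.map fun i => Nat.card (K i) - 1) := by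
  simpa only [Nat.card_units] using (pi fun i => (K i)ˣ).of_mulEquiv MulEquiv.piUnits

end IsProdOfCyclic

end CyclicProducts

section ChineseRemainder

open UniqueFactorizationMonoid

variable {R : Type*} [CommRing R] [IsDomain R] [IsPrincipalIdealRing R] [NormalizationMonoid R]

theorem isCoprime_of_mem_normalizedFactors {a p q : R} (hp : p ∈ normalizedFactors a)
    (hq : q ∈ normalizedFactors a) (hpq : p ≠ q) : IsCoprime p q := by
  refine ((irreducible_of_normalized_factor p hp).isCoprime_or_dvd q).resolve_right fun h => hpq ?_
  have hassoc : Associated p q :=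
    (irreducible_of_normalized_factor p hp).associated_of_dvd
      (irreducible_of_normalized_factor q hq) h
  rw [← normalize_normalized_factor p hp, ← normalize_normalized_factor q hq]
  exact normalize_eq_normalize_iff_associated.2 hassoc

theorem nonempty_quotient_equiv_pi_normalizedFactors [DecidableEq R] {a : R} (ha : Squarefree a)
    (ha₀ : a ≠ 0) :
    Nonempty (R ⧸ Ideal.span {a} ≃+*
      ∀ p : (normalizedFactors a).toFinset, R ⧸ Ideal.span {p.1}) := by
  have hcop (p q : (normalizedFactors a).toFinset) (hpq : p ≠ q) : IsCoprime p.1 q.1 :=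
    isCoprime_of_mem_normalizedFactors (Multiset.mem_toFinset.1 p.2) (Multiset.mem_toFinset.1 q.2)
      (Subtype.coe_ne_coe.2 hpq)
  have hprod : Associated a (∏ p : (normalizedFactors a).toFinset, p.1) := by
    rw [Finset.prod_coe_sort _ fun p => p, Finset.prod, Multiset.map_id', Multiset.toFinset_val,
      ((squarefree_iff_nodup_normalizedFactors ha₀).1 ha).dedup]
    exact (prod_normalizedFactors ha₀).symm
  have hspan : Ideal.span {a} = ⨅ p : (normalizedFactors a).toFinset, Ideal.span {p.1} := by
    rw [Ideal.iInf_span_singleton hcop, Ideal.span_singleton_eq_span_singleton]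
    exact hprod
  exact ⟨(Ideal.quotEquivOfEq hspan).trans (Ideal.quotientInfRingEquivPiQuotient _
    fun p q hpq => (Ideal.isCoprime_span_singleton_iff _ _).2 (hcop p q hpq))⟩

end ChineseRemainder

section GroupAlgebra

open Polynomial UniqueFactorizationMonoid

/-- The group algebra `R[C_m]` as `R[X] / (X ^ m - 1)`, the generator `1` of `ZMod m` corresponding
to the class of `X`. -/
noncomputable def monoidAlgebraEquivAdjoinRoot (R : Type*) [CommRing R] (m : ℕ) [NeZero m] :
    MonoidAlgebra R (C m) ≃ₐ[R] AdjoinRoot (X ^ m - 1 : R[X]) := by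
  have root_pow : AdjoinRoot.root (X ^ m - 1 : R[X]) ^ m = 1 := by
    have h := AdjoinRoot.eval₂_root (X ^ m - 1 : R[X])
    rwa [eval₂_sub, eval₂_X_pow, eval₂_one, sub_eq_zero] at h
  have generator_pow : MonoidAlgebra.of R (C m) (.ofAdd 1) ^ m = 1 := by
    rw [← map_pow, ← ofAdd_nsmul, nsmul_one, CharP.cast_eq_zero, ofAdd_zero, map_one]
  refine AlgEquiv.ofAlgHom
    (MonoidAlgebra.lift R _ (C m) (AddChar.zmodChar m root_pow).toMonoidHom)
    (AdjoinRoot.liftAlgHom _ (Algebra.ofId R _) (MonoidAlgebra.of R (C m) (.ofAdd 1))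
      (by rw [eval₂_sub, eval₂_X_pow, generator_pow, eval₂_one, sub_self])) ?_ ?_
  · ext
    simpa using AddChar.zmodChar_apply' root_pow 1
  · refine MonoidAlgebra.algHom_ext' (MonoidHom.ext fun a => ?_) (Subsingleton.elim _ _)
    have pow_val : (Multiplicative.ofAdd 1 : C m) ^ a.toAdd.val = a := by
      rw [← ofAdd_nsmul, nsmul_one, ZMod.natCast_zmod_val, ofAdd_toAdd]
    simp [AddChar.zmodChar_apply, pow_val]

/-- The multiset of degrees of the irreducible factors of `X ^ m - 1` over a field with `q`
elements, `q` coprime to `m`, where `x` is the class of `q` in `ZMod m`: the divisor `e` of `m`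
contributes the factors of `Φ_e`, whose common degree is the order of `q` modulo `e`. -/
noncomputable def cyclotomicDegrees {m : ℕ} (x : ZMod m) : Multiset ℕ :=
  ∑ e ∈ m.divisors,
    Multiset.replicate (e.totient / orderOf (x.cast : ZMod e)) (orderOf (x.cast : ZMod e))

variable {F : Type*} [Field F] [Fintype F] {m : ℕ}

theorem natCast_ne_zero_of_coprime_card (hm : (Fintype.card F).Coprime m) : (m : F) ≠ 0 := by
  have hcop : IsCoprime ((Fintype.card F : ℕ) : F) m := hm.cast
  rw [FiniteField.cast_card_eq_zero, isCoprime_zero_left] at hcop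
  exact hcop.ne_zero

theorem map_natDegree_normalizedFactors_cyclotomic [DecidableEq F]
    (hm : (Fintype.card F).Coprime m) :
    (normalizedFactors (cyclotomic m F)).map natDegree =
      Multiset.replicate (m.totient / orderOf (Fintype.card F : ZMod m))
        (orderOf (Fintype.card F : ZMod m)) := by
  obtain ⟨p, _, f, hp, hcard⟩ := FiniteField.card' F
  have : Fact p.Prime := ⟨hp⟩
  have hpm : p.Coprime m := hm.coprime_dvd_left (hcard ▸ dvd_pow_self p f.ne_zero)
  have order_eq :
      orderOf (ZMod.unitOfCoprime _ (hpm.pow_left f)) = orderOf (Fintype.card F : ZMod m) := by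
    rw [← orderOf_units, ZMod.coe_unitOfCoprime, hcard]
  have hsq : (normalizedFactors (cyclotomic m F)).Nodup := by
    have : NeZero (m : F) := ⟨natCast_ne_zero_of_coprime_card hm⟩
    exact (squarefree_iff_nodup_normalizedFactors (cyclotomic_ne_zero m F)).1
      (squarefree_cyclotomic m F)
  rw [Multiset.eq_replicate, Multiset.card_map, ← order_eq,
    ← normalizedFactors_cyclotomic_card hcard hpm, Multiset.toFinset_card_of_nodup hsq]
  refine ⟨rfl, fun d hd => ?_⟩
  obtain ⟨P, hP, rfl⟩ := Multiset.mem_map.1 hd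
  exact natDegree_of_mem_normalizedFactors_cyclotomic hcard hpm hP

theorem normalizedFactors_finset_prod {α ι : Type*} [CommMonoidWithZero α] [NormalizationMonoid α]
    [UniqueFactorizationMonoid α] [Nontrivial α] (s : Finset ι) {f : ι → α}
    (hf : ∀ i ∈ s, f i ≠ 0) :
    normalizedFactors (∏ i ∈ s, f i) = ∑ i ∈ s, normalizedFactors (f i) := by
  rw [Finset.prod, normalizedFactors_multiset_prod _ (by simpa using hf), Multiset.map_map]
  rfl

theorem map_natDegree_normalizedFactors_X_pow_sub_one [DecidableEq F] [NeZero m]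
    (hm : (Fintype.card F).Coprime m) :
    (normalizedFactors (X ^ m - 1 : F[X])).map natDegree =
      cyclotomicDegrees (Fintype.card F : ZMod m) := by
  rw [← prod_cyclotomic_eq_X_pow_sub_one (NeZero.pos m),
    normalizedFactors_finset_prod _ fun e _ => cyclotomic_ne_zero e F,
    ← Multiset.coe_mapAddMonoidHom, map_sum, cyclotomicDegrees]
  refine Finset.sum_congr rfl fun e he => ?_
  have hem : e ∣ m := Nat.dvd_of_mem_divisors he
  rw [Multiset.coe_mapAddMonoidHom, ZMod.cast_natCast hem]
  exact map_natDegree_normalizedFactors_cyclotomic (hm.coprime_dvd_right hem)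

theorem card_adjoinRoot {g : F[X]} (hg : g ≠ 0) :
    Nat.card (AdjoinRoot g) = Fintype.card F ^ g.natDegree := by
  have : Module.Finite F (AdjoinRoot g) := (AdjoinRoot.powerBasis hg).finite
  rw [Module.natCard_eq_pow_finrank (K := F), (AdjoinRoot.powerBasis hg).finrank,
    AdjoinRoot.powerBasis_dim, Nat.card_eq_fintype_card]

theorem isProdOfCyclic_units_adjoinRoot [DecidableEq F] {f : F[X]} (hf : Squarefree f)
    (hf₀ : f ≠ 0) :
    IsProdOfCyclic (AdjoinRoot f)ˣ
      (((normalizedFactors f).map natDegree).map fun d => Fintype.card F ^ d - 1) := by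
  have irred (g : (normalizedFactors f).toFinset) : Irreducible g.1 :=
    irreducible_of_normalized_factor _ (Multiset.mem_toFinset.1 g.2)
  have (g : (normalizedFactors f).toFinset) : Fact (Irreducible g.1) := ⟨irred g⟩
  have (g : (normalizedFactors f).toFinset) : Finite (AdjoinRoot g.1) :=
    Nat.finite_of_card_ne_zero (by simp [card_adjoinRoot (irred g).ne_zero])
  obtain ⟨e⟩ := nonempty_quotient_equiv_pi_normalizedFactors hf hf₀
  have orders : (Finset.univ.val.map fun g : (normalizedFactors f).toFinset =>
      Nat.card (AdjoinRoot g.1) - 1) =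
        (normalizedFactors f).map fun g => Fintype.card F ^ g.natDegree - 1 := by
    simp only [card_adjoinRoot (irred _).ne_zero]
    refine (Multiset.attach_map_val' (normalizedFactors f).toFinset.val
      fun g => Fintype.card F ^ g.natDegree - 1).trans ?_
    rw [Multiset.toFinset_val, ((squarefree_iff_nodup_normalizedFactors hf₀).1 hf).dedup]
  rw [Multiset.map_map]
  exact orders ▸ (IsProdOfCyclic.units_pi fun g : (normalizedFactors f).toFinset =>
    AdjoinRoot g.1).of_mulEquiv (Units.mapEquiv e.toMulEquiv)

theorem isProdOfCyclic_units_monoidAlgebra (hm : (Fintype.card F).Coprime m) :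
    IsProdOfCyclic (MonoidAlgebra F (C m))ˣ
      ((cyclotomicDegrees (Fintype.card F : ZMod m)).map fun d => Fintype.card F ^ d - 1) := by
  classical
  have hm₀ : (m : F) ≠ 0 := natCast_ne_zero_of_coprime_card hm
  have : NeZero m := ⟨fun h => hm₀ (by rw [h, Nat.cast_zero])⟩
  have hsep : (X ^ m - 1 : F[X]).Separable := X_pow_sub_one_separable_iff.2 hm₀
  rw [← map_natDegree_normalizedFactors_X_pow_sub_one hm]
  exact (isProdOfCyclic_units_adjoinRoot hsep.squarefree hsep.ne_zero).of_mulEquiv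
    (Units.mapEquiv (monoidAlgebraEquivAdjoinRoot F m).toMulEquiv)

end GroupAlgebra

theorem orderOf_eq_prime_pow_card {M : Type*} [Monoid M] [DecidableEq M] {p k : ℕ}
    (hp : p.Prime) {x : M} (hx : x ^ p ^ k = 1) :
    orderOf x = p ^ ((Finset.range k).filter fun i => x ^ p ^ i ≠ 1).card := by
  obtain ⟨j, hjk, hj⟩ := (Nat.dvd_prime_pow hp).1 (orderOf_dvd_of_pow_eq_one hx)
  have filter_eq : ((Finset.range k).filter fun i => x ^ p ^ i ≠ 1) = Finset.range j := by
    ext i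
    rw [Finset.mem_filter, Finset.mem_range, Finset.mem_range, Ne,
      ← orderOf_dvd_iff_pow_eq_one, hj, Nat.pow_dvd_pow_iff_le_right hp.one_lt]
    omega
  rw [filter_eq, Finset.card_range, hj]

-- `orderOf` does not evaluate; counting nontrivial powers makes concrete instances decidable.
theorem cyclotomicDegrees_eq_of_pow_eq_one {m p k : ℕ} (hp : p.Prime) {x : ZMod m}
    (hx : x ^ p ^ k = 1) :
    cyclotomicDegrees x = ∑ e ∈ m.divisors,
      let o := p ^ ((Finset.range k).filter fun i => (x.cast : ZMod e) ^ p ^ i ≠ 1).card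
      Multiset.replicate (e.totient / o) o := by
  refine Finset.sum_congr rfl fun e he => ?_
  have hcast : (x.cast : ZMod e) ^ p ^ k = 1 := by
    rw [← ZMod.castHom_apply (h := Nat.dvd_of_mem_divisors he), ← map_pow, hx, map_one]
  rw [orderOf_eq_prime_pow_card hp hcast]

section ThirtyTwo

open Multiset

theorem cyclotomicDegrees_one : cyclotomicDegrees (1 : ZMod 32) = replicate 32 1 := by
  rw [cyclotomicDegrees_eq_of_pow_eq_one (k := 0) Nat.prime_two (by decide)]
  decide +kernel

theorem cyclotomicDegrees_neg_one :
    cyclotomicDegrees (-1 : ZMod 32) = replicate 2 1 + replicate 15 2 := by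
  rw [cyclotomicDegrees_eq_of_pow_eq_one (k := 1) Nat.prime_two (by decide)]
  decide +kernel

theorem cyclotomicDegrees_of_three_mod_eight {x : ZMod 32}
    (hx : x = 3 ∨ x = -5 ∨ x = 11 ∨ x = -13) :
    cyclotomicDegrees x = replicate 2 8 + (replicate 2 4 + (replicate 3 2 + replicate 2 1)) := by
  rcases hx with rfl | rfl | rfl | rfl <;>
    rw [cyclotomicDegrees_eq_of_pow_eq_one (k := 3) Nat.prime_two (by decide)] <;>
    decide +kernel

theorem cyclotomicDegrees_of_five_mod_eight {x : ZMod 32}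
    (hx : x = -3 ∨ x = 5 ∨ x = -11 ∨ x = 13) :
    cyclotomicDegrees x = replicate 2 8 + (replicate 2 4 + (replicate 2 2 + replicate 4 1)) := by
  rcases hx with rfl | rfl | rfl | rfl <;>
    rw [cyclotomicDegrees_eq_of_pow_eq_one (k := 3) Nat.prime_two (by decide)] <;>
    decide +kernel

theorem cyclotomicDegrees_seven :
    cyclotomicDegrees (7 : ZMod 32) = replicate 2 1 + (replicate 4 4 + replicate 7 2) := by
  rw [cyclotomicDegrees_eq_of_pow_eq_one (k := 2) Nat.prime_two (by decide)]
  decide +kernel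

theorem cyclotomicDegrees_neg_seven :
    cyclotomicDegrees (-7 : ZMod 32) = replicate 8 1 + (replicate 4 2 + replicate 4 4) := by
  rw [cyclotomicDegrees_eq_of_pow_eq_one (k := 2) Nat.prime_two (by decide)]
  decide +kernel

theorem cyclotomicDegrees_fifteen :
    cyclotomicDegrees (15 : ZMod 32) = replicate 2 1 + replicate 15 2 := by
  rw [cyclotomicDegrees_eq_of_pow_eq_one (k := 1) Nat.prime_two (by decide)]
  decide +kernel

theorem cyclotomicDegrees_neg_fifteen :
    cyclotomicDegrees (-15 : ZMod 32) = replicate 16 1 + replicate 8 2 := by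
  rw [cyclotomicDegrees_eq_of_pow_eq_one (k := 1) Nat.prime_two (by decide)]
  decide +kernel

end ThirtyTwo

theorem unit_group_stmt_1 (F : Type*) [Field F] [Fintype F] (p n : ℕ)
    (hp : p.Prime) (hp2 : 2 < p) [CharP F p] (hn : 0 < n)
    (hF : Fintype.card F = p ^ n) :
    (((p ^ n : ZMod 32) = 1) →
      Nonempty ((MonoidAlgebra F (C 32))ˣ ≃* ((Fin (32) → C (p ^ n - 1))))) ∧
    (((p ^ n : ZMod 32) = -1) →
      Nonempty ((MonoidAlgebra F (C 32))ˣ ≃* ((Fin (2) → C (p ^ n - 1)) × (Fin (15) → C (p ^ (2 * n) - 1))))) ∧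
    ((((p ^ n : ZMod 32) = 3) ∨ ((p ^ n : ZMod 32) = -5) ∨ ((p ^ n : ZMod 32) = 11) ∨ ((p ^ n : ZMod 32) = -13)) →
      Nonempty ((MonoidAlgebra F (C 32))ˣ ≃* ((Fin (2) → C (p ^ (8 * n) - 1)) × (Fin (2) → C (p ^ (4 * n) - 1)) × (Fin (3) → C (p ^ (2 * n) - 1)) × (Fin (2) → C (p ^ n - 1))))) ∧
    ((((p ^ n : ZMod 32) = -3) ∨ ((p ^ n : ZMod 32) = 5) ∨ ((p ^ n : ZMod 32) = -11) ∨ ((p ^ n : ZMod 32) = 13)) →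
      Nonempty ((MonoidAlgebra F (C 32))ˣ ≃* ((Fin (2) → C (p ^ (8 * n) - 1)) × (Fin (2) → C (p ^ (4 * n) - 1)) × (Fin (2) → C (p ^ (2 * n) - 1)) × (Fin (4) → C (p ^ n - 1))))) ∧
    (((p ^ n : ZMod 32) = 7) →
      Nonempty ((MonoidAlgebra F (C 32))ˣ ≃* ((Fin (2) → C (p ^ n - 1)) × (Fin (4) → C (p ^ (4 * n) - 1)) × (Fin (7) → C (p ^ (2 * n) - 1))))) ∧
    (((p ^ n : ZMod 32) = -7) →
      Nonempty ((MonoidAlgebra F (C 32))ˣ ≃* ((Fin (8) → C (p ^ n - 1)) × (Fin (4) → C (p ^ (2 * n) - 1)) × (Fin (4) → C (p ^ (4 * n) - 1))))) ∧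
    (((p ^ n : ZMod 32) = 15) →
      Nonempty ((MonoidAlgebra F (C 32))ˣ ≃* ((Fin (2) → C (p ^ n - 1)) × (Fin (15) → C (p ^ (2 * n) - 1))))) ∧
    (((p ^ n : ZMod 32) = -15) →
      Nonempty ((MonoidAlgebra F (C 32))ˣ ≃* ((Fin (16) → C (p ^ n - 1)) × (Fin (8) → C (p ^ (2 * n) - 1))))) := by
  have hcop : (Fintype.card F).Coprime 32 :=
    hF ▸ .pow n 5 ((Nat.coprime_primes hp Nat.prime_two).2 hp2.ne')
  have key {x : ZMod 32} {A : Type} [Group A] (hx : (p ^ n : ZMod 32) = x)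
      (hA : IsProdOfCyclic A ((cyclotomicDegrees x).map fun d => p ^ (d * n) - 1)) :
      Nonempty ((MonoidAlgebra F (C 32))ˣ ≃* A) := by
    have hunits := isProdOfCyclic_units_monoidAlgebra hcop
    simp only [hF, Nat.cast_pow, hx, ← pow_mul'] at hunits
    exact hunits.nonempty_mulEquiv hA
  refine ⟨fun h => key h ?_, fun h => key h ?_, fun h => key rfl ?_, fun h => key rfl ?_,
    fun h => key h ?_, fun h => key h ?_, fun h => key h ?_, fun h => key h ?_⟩
  · simpa [cyclotomicDegrees_one] using .fin_arrow 32 (p ^ n - 1)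
  · simpa [cyclotomicDegrees_neg_one] using (IsProdOfCyclic.fin_arrow 2 _).prod (.fin_arrow 15 _)
  · simpa [cyclotomicDegrees_of_three_mod_eight h] using (IsProdOfCyclic.fin_arrow 2 _).prod
      (.prod (.fin_arrow 2 _) (.prod (.fin_arrow 3 _) (.fin_arrow 2 _)))
  · simpa [cyclotomicDegrees_of_five_mod_eight h] using (IsProdOfCyclic.fin_arrow 2 _).prod
      (.prod (.fin_arrow 2 _) (.prod (.fin_arrow 2 _) (.fin_arrow 4 _)))
  · simpa [cyclotomicDegrees_seven] using (IsProdOfCyclic.fin_arrow 2 _).prod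
      (.prod (.fin_arrow 4 _) (.fin_arrow 7 _))
  · simpa [cyclotomicDegrees_neg_seven] using (IsProdOfCyclic.fin_arrow 8 _).prod
      (.prod (.fin_arrow 4 _) (.fin_arrow 4 _))
  · simpa [cyclotomicDegrees_fifteen] using (IsProdOfCyclic.fin_arrow 2 _).prod (.fin_arrow 15 _)
  · simpa [cyclotomicDegrees_neg_fifteen] using
      (IsProdOfCyclic.fin_arrow 16 _).prod (.fin_arrow 8 _)
end

section
/- Let F be a finite field of characteristic p > 2 with q = p^n elements, and let G = C_16 × C_2. Then the unit group U(FG) is isomorphic to: C_{p^n-1}^{32} if q ≡ 1 (mod 16); C_{p^n-1}^4 × C_{p^{2n}-1}^{14} if q ≡ -1 (mod 16); C_{p^n-1}^4 × C_{p^{2n}-1}^6 × C_{p^{4n}-1}^4 if q ≡ 3 or -5 (mod 16); C_{p^n-1}^8 × C_{p^{2n}-1}^4 × C_{p^{4n}-1}^4 if q ≡ -3 or 5 (mod 16); C_{p^n-1}^4 × C_{p^{2n}-1}^{14} if q ≡ 7 (mod 16); C_{p^n-1}^{16} × C_{p^{2n}-1}^8 if q ≡ -7 (mod 16). -/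
/-!
Let `G` be a finite abelian group of order prime to `q = |F|`, and let `K` be a separable closure
of `F`. Every character `χ : G → Kˣ` extends to an algebra map `F[G] → K`, and raising to the
`q`-th power carries this map to the one attached to `χ ^ q`. A character lying in a `q`-power orbit
of length `d` therefore takes values in the field with `q ^ d` elements, and an element of `F[G]`
is determined by its values at one character per orbit. As the orbit lengths add up to `|G|`, both
sides of the resulting embedding of `F[G]` into a product of finite fields have `q ^ |G|` elements,
so it is an isomorphism. Since `G` is isomorphic to its dual, the orbit lengths can be read off from
the permutation `g ↦ g ^ q` of `G`, by counting the fixed points of its iterates.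
-/

open Function

section PermOrbits

/-- The orbits of a permutation, including the singletons formed by its fixed points. -/
abbrev PermOrbits {X : Type*} (σ : Equiv.Perm X) : Type _ :=
  MulAction.orbitRel.Quotient (Subgroup.zpowers σ) X

variable {X : Type*} {σ : Equiv.Perm X}

/-- The number of elements of an orbit, with value `0` for an infinite orbit. It is defined as the
period of a representative; see `natCard_orbit_eq_orbitLength`. -/
noncomputable def orbitLength (ω : PermOrbits σ) : ℕ := minimalPeriod σ ω.out

lemma natCard_orbit_eq_orbitLength (ω : PermOrbits σ) :
    Nat.card {x : X // (⟦x⟧ : PermOrbits σ) = ω} = orbitLength ω := by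
  let e : {x : X // (⟦x⟧ : PermOrbits σ) = ω} ≃ MulAction.orbit (Subgroup.zpowers σ) ω.out :=
    Equiv.subtypeEquivRight fun x => by
      rw [← MulAction.orbitRel_apply, ← Quotient.eq'', Quotient.out_eq']
  rw [Nat.card_congr (e.trans (MulAction.orbitZPowersEquiv σ ω.out)), Nat.card_zmod]
  rfl

variable [Finite X]

lemma exists_iterate_out_eq (x : X) : ∃ n : ℕ, σ^[n] (⟦x⟧ : PermOrbits σ).out = x := by
  obtain ⟨⟨τ, hτ⟩, hx⟩ := Quotient.exact (Quotient.out_eq (⟦x⟧ : PermOrbits σ)).symm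
  obtain ⟨n, rfl⟩ := mem_powers_iff_mem_zpowers.2 hτ
  exact ⟨n, (congrFun (Equiv.Perm.coe_pow σ n) _).symm.trans hx⟩

lemma orbitLength_mk (x : X) : orbitLength (⟦x⟧ : PermOrbits σ) = minimalPeriod σ x := by
  obtain ⟨n, hn⟩ := exists_iterate_out_eq (σ := σ) x
  conv_rhs => rw [← hn, minimalPeriod_apply_iterate (σ.injective.mem_periodicPts _)]
  rfl

lemma natCard_minimalPeriod_eq (m : ℕ) :
    Nat.card {x // minimalPeriod σ x = m} =
      m * Nat.card {ω : PermOrbits σ // orbitLength ω = m} := by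
  have := Fintype.ofFinite {ω : PermOrbits σ // orbitLength ω = m}
  let e := Equiv.sigmaSubtypeFiberEquivSubtype (fun x => (⟦x⟧ : PermOrbits σ))
    (p := (minimalPeriod σ · = m)) (q := (orbitLength · = m)) fun x => by rw [orbitLength_mk]
  rw [← Nat.card_congr e, Nat.card_sigma,
    Finset.sum_congr rfl fun ω _ => (natCard_orbit_eq_orbitLength ω.1).trans ω.2]
  simp [mul_comm]

lemma natCard_iterate_eq_self {k : ℕ} (hk : k ≠ 0) :
    Nat.card {x // σ^[k] x = x} =
      ∑ m ∈ k.divisors, m * Nat.card {ω : PermOrbits σ // orbitLength ω = m} := by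
  have hdvd (x : X) : σ^[k] x = x ↔ minimalPeriod σ x ∈ k.divisors := by
    rw [Nat.mem_divisors, and_iff_left hk]
    exact isPeriodicPt_iff_minimalPeriod_dvd
  let e := Equiv.sigmaSubtypeFiberEquivSubtype (minimalPeriod σ) (q := (· ∈ k.divisors)) hdvd
  rw [← Nat.card_congr e, Nat.card_sigma,
    Finset.sum_coe_sort k.divisors fun m => Nat.card {x // minimalPeriod σ x = m}]
  simp only [natCard_minimalPeriod_eq]

lemma orbitLength_ne_zero (ω : PermOrbits σ) : orbitLength ω ≠ 0 :=
  (minimalPeriod_pos_of_mem_periodicPts (σ.injective.mem_periodicPts _)).ne'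

lemma natCard_sumElim_eq {I J V : Type*} [Finite I] [Finite J] (d : I → V) (d' : J → V) (v : V) :
    Nat.card {x // Sum.elim d d' x = v} = Nat.card {i // d i = v} + Nat.card {j // d' j = v} := by
  rw [Nat.card_congr Equiv.subtypeSum, Nat.card_sum]
  rfl

lemma natCard_orbitLength_of_iterate_four {a b c : ℕ} (h₁ : Nat.card {x // σ x = x} = a)
    (h₂ : Nat.card {x // σ^[2] x = x} = a + 2 * b) (h₄ : ∀ x, σ^[4] x = x)
    (hX : Nat.card X = a + 2 * b + 4 * c) (m : ℕ) :
    Nat.card {ω : PermOrbits σ // orbitLength ω = m} =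
      Nat.card {j : Fin a ⊕ Fin b ⊕ Fin c //
        Sum.elim (fun _ => 1) (Sum.elim (fun _ => 2) fun _ => 4) j = m} := by
  have hdiv : Nat.divisors 4 = {1, 2, 4} := rfl
  let N (k : ℕ) := Nat.card {ω : PermOrbits σ // orbitLength ω = k}
  have hN₁ : a = N 1 := by
    rw [← h₁, ← iterate_one σ, natCard_iterate_eq_self one_ne_zero]
    simp [N]
  have hN₂ : a + 2 * b = N 1 + 2 * N 2 := by
    rw [← h₂, natCard_iterate_eq_self two_ne_zero]
    simp [N, Nat.prime_two.divisors]
  have hN₄ : a + 2 * b + 4 * c = N 1 + (2 * N 2 + 4 * N 4) := by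
    rw [← hX, ← Nat.card_congr (Equiv.subtypeUnivEquiv h₄), natCard_iterate_eq_self four_ne_zero]
    simp [N, hdiv]
  rw [natCard_sumElim_eq, natCard_sumElim_eq]
  by_cases hm : m ∈ Nat.divisors 4
  · obtain rfl | rfl | rfl : m = 1 ∨ m = 2 ∨ m = 4 := by simpa [hdiv] using hm
    · simpa using hN₁.symm
    · simpa using (by lia : N 2 = b)
    · simpa using (by lia : N 4 = c)
  · have : IsEmpty {ω : PermOrbits σ // orbitLength ω = m} := ⟨fun ω => hm <| by
      rw [← ω.2, Nat.mem_divisors]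
      exact ⟨IsPeriodicPt.minimalPeriod_dvd (h₄ _), four_ne_zero⟩⟩
    have hne : 1 ≠ m ∧ 2 ≠ m ∧ 4 ≠ m := by simpa [hdiv, eq_comm] using hm
    simp [hne]

lemma sum_orbitLength [Fintype (PermOrbits σ)] :
    ∑ ω : PermOrbits σ, orbitLength ω = Nat.card X := by
  rw [← Nat.card_congr (Equiv.sigmaFiberEquiv fun x => (⟦x⟧ : PermOrbits σ)), Nat.card_sigma]
  simp only [natCard_orbit_eq_orbitLength]

end PermOrbits

section FrobeniusFixedField

open Polynomial

variable {F K : Type*} [Field F] [Fintype F] [Field K] [Algebra F K]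

lemma frobeniusAlgHom_pow_apply (d : ℕ) (x : K) :
    (FiniteField.frobeniusAlgHom F K ^ d) x = x ^ Fintype.card F ^ d := by
  rw [AlgHom.coe_pow, FiniteField.coe_frobeniusAlgHom, pow_iterate]

variable (F K) in
/-- The subfield of `K` fixed by the `d`-th power of the Frobenius of `K / F`: a copy of the field
with `q ^ d` elements, `q = |F|`, when `K` is separably closed and `d ≠ 0`. -/
def frobeniusFixedField (d : ℕ) : Subfield K :=
  ((FiniteField.frobeniusAlgHom F K ^ d : K →ₐ[F] K) : K →+* K).eqLocusField (RingHom.id K)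

lemma mem_frobeniusFixedField {d : ℕ} {x : K} :
    x ∈ frobeniusFixedField F K d ↔ x ^ Fintype.card F ^ d = x := by
  rw [← frobeniusAlgHom_pow_apply]
  rfl

variable (F K) in
lemma natCard_frobeniusFixedField [IsSepClosed K] {d : ℕ} (hd : d ≠ 0) :
    Nat.card (frobeniusFixedField F K d) = Fintype.card F ^ d := by
  have hchar : ringChar F ∣ Fintype.card F :=
    (CharP.cast_eq_zero_iff F _ _).1 (FiniteField.cast_card_eq_zero F)
  have hsep : (X ^ Fintype.card F ^ d - X : F[X]).Separable :=
    galois_poly_separable (ringChar F) _ (dvd_pow hchar hd)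
  have hroots : (frobeniusFixedField F K d : Set K) =
      (X ^ Fintype.card F ^ d - X : F[X]).rootSet K := by
    ext x
    simp [mem_rootSet, hsep.ne_zero, mem_frobeniusFixedField, sub_eq_zero]
  rw [← SetLike.coe_sort_coe, hroots, Nat.card_eq_fintype_card,
    card_rootSet_eq_natDegree hsep (IsSepClosed.splits_codomain _ hsep),
    FiniteField.X_pow_card_pow_sub_X_natDegree_eq F hd Fintype.one_lt_card]

lemma nonempty_units_mulEquiv_cyclic (L : Type*) [Field L] [Finite L] :
    Nonempty (Lˣ ≃* C (Nat.card L - 1)) :=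
  ⟨mulEquivOfCyclicCardEq (by
    rw [Nat.card_units, Nat.card_congr Multiplicative.toAdd, Nat.card_zmod])⟩

end FrobeniusFixedField

section CharacterEvaluation

open MonoidAlgebra

variable {F K G : Type*} [Field F] [Field K] [Algebra F K]

lemma lift_pow_card_pow [Monoid G] [Fintype F] (χ : G →* K) (n : ℕ) (a : MonoidAlgebra F G) :
    lift F K G (χ ^ Fintype.card F ^ n) a = lift F K G χ a ^ Fintype.card F ^ n := by
  have hcomp : lift F K G (χ ^ Fintype.card F ^ n) =
      (FiniteField.frobeniusAlgHom F K ^ n).comp (lift F K G χ) := by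
    refine algHom_ext (fun g => ?_) (by ext)
    rw [AlgHom.comp_apply, frobeniusAlgHom_pow_apply, lift_single, lift_single, one_smul, one_smul,
      MonoidHom.pow_apply]
  rw [hcomp, AlgHom.comp_apply, frobeniusAlgHom_pow_apply]

lemma eq_zero_of_forall_lift_eq_zero [CommGroup G] [Finite G]
    [HasEnoughRootsOfUnity K (Monoid.exponent G)] {a : MonoidAlgebra F G}
    (ha : ∀ χ : G →* K, lift F K G χ a = 0) : a = 0 := by
  -- Distinct elements of `G` give distinct characters of its dual, so Dedekind's lemma applies.
  let ev (g : G) : (G →* K) →* K := MonoidHom.eval g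
  have hev : Injective ev := fun g h hgh => by
    rw [← CommGroup.forall_apply_eq_apply_iff G (M := K)]
    exact fun χ => Units.ext (DFunLike.congr_fun hgh ((Units.coeHom K).comp χ))
  have hli : LinearIndependent F fun g => (ev g : (G →* K) → K) :=
    ((linearIndependent_monoidHom (G →* K) K).comp ev hev).restrict_scalars' F
  refine coeff_injective (linearIndependent_iff.1 hli a.coeff ?_)
  ext χ
  simpa [lift_apply, Finsupp.linearCombination_apply, Finsupp.sum, ev] using ha χ

lemma hasEnoughRootsOfUnity_exponent [Group G] [Fintype F] [IsSepClosed K]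
    (h : (Nat.card G).Coprime (Fintype.card F)) :
    HasEnoughRootsOfUnity K (Monoid.exponent G) := by
  have hG : (Nat.card G : K) ≠ 0 := by
    have hunit := h.cast (R := F)
    rw [FiniteField.cast_card_eq_zero, isCoprime_zero_right] at hunit
    simpa using (hunit.map (algebraMap F K)).ne_zero
  have : NeZero (Monoid.exponent G : K) :=
    ⟨ne_zero_of_dvd_ne_zero hG (Nat.cast_dvd_cast Group.exponent_dvd_nat_card)⟩
  infer_instance

end CharacterEvaluation

section Decomposition

open MonoidAlgebra

variable {F K G : Type*} [Field F] [Fintype F] [Field K] [Algebra F K]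

lemma powCoprime_iterate [Group G] {m : ℕ} (h : (Nat.card G).Coprime m) (n : ℕ) (g : G) :
    (powCoprime h)^[n] g = g ^ m ^ n :=
  congrFun (pow_iterate m n) g

variable [CommGroup G]

lemma lift_powCoprime_iterate (h : (Nat.card G).Coprime (Fintype.card F))
    (e : G →* (G →* K)) (n : ℕ) (g : G) (a : MonoidAlgebra F G) :
    lift F K G (e ((powCoprime h)^[n] g)) a = lift F K G (e g) a ^ Fintype.card F ^ n := by
  rw [powCoprime_iterate, map_pow, lift_pow_card_pow]

/-- Evaluation of `F[G]` at one character for each orbit of `g ↦ g ^ q`, `q = |F|`. The characters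
are indexed by `G` through `e`, and the one used for `ω` is `e ω.out`. -/
noncomputable def orbitEval (h : (Nat.card G).Coprime (Fintype.card F)) (e : G →* (G →* K)) :
    MonoidAlgebra F G →+*
      ∀ ω : PermOrbits (powCoprime h), frobeniusFixedField F K (orbitLength ω) :=
  RingHom.pi fun ω => (lift F K G (e ω.out) : MonoidAlgebra F G →+* K).codRestrict _ fun a => by
    rw [mem_frobeniusFixedField, RingHom.coe_coe, ← lift_powCoprime_iterate h e, orbitLength,
      iterate_minimalPeriod]

variable [Finite G]

lemma orbitEval_injective [HasEnoughRootsOfUnity K (Monoid.exponent G)]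
    (h : (Nat.card G).Coprime (Fintype.card F)) {e : G →* (G →* K)} (he : Surjective e) :
    Injective (orbitEval h e) := by
  refine (injective_iff_map_eq_zero _).2 fun a ha =>
    eq_zero_of_forall_lift_eq_zero (K := K) fun χ => ?_
  obtain ⟨g, rfl⟩ := he χ
  obtain ⟨n, hn⟩ := exists_iterate_out_eq (σ := powCoprime h) g
  have hout : lift F K G (e (⟦g⟧ : PermOrbits (powCoprime h)).out) a = 0 :=
    congrArg Subtype.val (congrFun ha _)
  rw [← hn, lift_powCoprime_iterate, hout, zero_pow (pow_ne_zero n Fintype.card_ne_zero)]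

variable (K) in
lemma natCard_pi_frobeniusFixedField [IsSepClosed K]
    (h : (Nat.card G).Coprime (Fintype.card F)) :
    Nat.card (∀ ω : PermOrbits (powCoprime h), frobeniusFixedField F K (orbitLength ω)) =
      Fintype.card F ^ Nat.card G := by
  have := Fintype.ofFinite (PermOrbits (powCoprime h))
  rw [Nat.card_pi, ← sum_orbitLength (σ := powCoprime h), ← Finset.prod_pow_eq_pow_sum]
  exact Finset.prod_congr rfl fun ω _ => natCard_frobeniusFixedField F K (orbitLength_ne_zero ω)

variable (K) in
theorem nonempty_ringEquiv_pi_frobeniusFixedField [IsSepClosed K]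
    (h : (Nat.card G).Coprime (Fintype.card F)) :
    Nonempty (MonoidAlgebra F G ≃+*
      ∀ ω : PermOrbits (powCoprime h), frobeniusFixedField F K (orbitLength ω)) := by
  have := hasEnoughRootsOfUnity_exponent (K := K) h
  obtain ⟨e⟩ := CommGroup.monoidHom_mulEquiv_of_hasEnoughRootsOfUnity G K
  let e' : G ≃* (G →* K) := (MonoidHom.toHomUnitsMulEquiv.trans e).symm
  have hcard := natCard_pi_frobeniusFixedField K h
  have := Nat.finite_of_card_ne_zero (hcard.trans_ne (pow_ne_zero _ Fintype.card_ne_zero))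
  have hle : Nat.card (∀ ω : PermOrbits (powCoprime h), frobeniusFixedField F K (orbitLength ω)) ≤
      Nat.card (MonoidAlgebra F G) := by
    rw [hcard, Nat.card_congr (coeffEquiv.trans Finsupp.equivFunOnFinite), Nat.card_fun,
      Fintype.card_eq_nat_card]
  have hinj := orbitEval_injective h (e := e'.toMonoidHom) e'.surjective
  exact ⟨.ofBijective _ (hinj.bijective_of_nat_card_le hle)⟩

theorem nonempty_units_mulEquiv_pi_orbitLength (h : (Nat.card G).Coprime (Fintype.card F)) :
    Nonempty ((MonoidAlgebra F G)ˣ ≃*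
      ∀ ω : PermOrbits (powCoprime h), C (Fintype.card F ^ orbitLength ω - 1)) := by
  obtain ⟨e⟩ := nonempty_ringEquiv_pi_frobeniusFixedField (SeparableClosure F) h
  have hcard (ω : PermOrbits (powCoprime h)) :=
    natCard_frobeniusFixedField F (SeparableClosure F) (orbitLength_ne_zero ω)
  have hfin (ω : PermOrbits (powCoprime h)) :=
    Nat.finite_of_card_ne_zero ((hcard ω).trans_ne (pow_ne_zero _ Fintype.card_ne_zero))
  have hunits (ω : PermOrbits (powCoprime h)) := hcard ω ▸ nonempty_units_mulEquiv_cyclic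
    (frobeniusFixedField F (SeparableClosure F) (orbitLength ω))
  exact ⟨((Units.mapEquiv e.toMulEquiv).trans .piUnits).trans
    (.piCongrRight fun ω => (hunits ω).some)⟩

end Decomposition

section Products

variable {I J : Type*}

lemma nonempty_pi_mulEquiv_of_natCard_fiber_eq [Finite I] [Finite J] {V : Type*} (M : V → Type*)
    [∀ v, Mul (M v)] {d : I → V} {d' : J → V}
    (h : ∀ v, Nat.card {i // d i = v} = Nat.card {j // d' j = v}) :
    Nonempty ((∀ i, M (d i)) ≃* ∀ j, M (d' j)) := by
  let e : I ≃ J := Equiv.ofFiberEquiv fun v => (Finite.card_eq.1 (h v)).some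
  have he : d' ∘ e = d := funext (Equiv.ofFiberEquiv_map _)
  clear_value e
  subst he
  exact ⟨MulEquiv.symm ⟨(Equiv.piCongrLeft (fun j => M (d' j)) e).symm, fun _ _ => rfl⟩⟩

/-- A product over a disjoint union of index sets is the product of the two partial products. -/
def piSumElimMulEquiv {V : Type*} (M : V → Type*) [∀ v, Mul (M v)] (d : I → V) (d' : J → V) :
    (∀ x, M (Sum.elim d d' x)) ≃* (∀ i, M (d i)) × ∀ j, M (d' j) :=
  ⟨Equiv.sumPiEquivProdPi fun x => M (Sum.elim d d' x), fun _ _ => rfl⟩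

end Products

section FourOrbitLengths

variable {F : Type*} [Field F] [Fintype F]

lemma nonempty_units_mulEquiv_of_pow_card_pow_four {G : Type*} [CommGroup G] [Finite G] {a b c : ℕ}
    (h : (Nat.card G).Coprime (Fintype.card F))
    (h₁ : Nat.card {g : G // g ^ Fintype.card F = g} = a)
    (h₂ : Nat.card {g : G // g ^ Fintype.card F ^ 2 = g} = a + 2 * b)
    (h₄ : ∀ g : G, g ^ Fintype.card F ^ 4 = g) (hG : Nat.card G = a + 2 * b + 4 * c) :
    Nonempty ((MonoidAlgebra F G)ˣ ≃* (Fin a → C (Fintype.card F - 1)) ×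
      (Fin b → C (Fintype.card F ^ 2 - 1)) × (Fin c → C (Fintype.card F ^ 4 - 1))) := by
  let M (m : ℕ) := C (Fintype.card F ^ m - 1)
  have horbits := natCard_orbitLength_of_iterate_four (σ := powCoprime h) h₁
    (by simpa only [powCoprime_iterate] using h₂)
    (fun g => (powCoprime_iterate h 4 g).trans (h₄ g)) hG
  obtain ⟨e⟩ := nonempty_units_mulEquiv_pi_orbitLength h
  obtain ⟨e'⟩ := nonempty_pi_mulEquiv_of_natCard_fiber_eq M horbits
  have split : _ ≃* (Fin a → C (Fintype.card F ^ 1 - 1)) × (Fin b → M 2) × (Fin c → M 4) :=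
    (piSumElimMulEquiv M _ _).trans (.prodCongr (.refl _) (piSumElimMulEquiv M _ _))
  rw [pow_one] at split
  exact ⟨(e.trans e').trans split⟩

theorem nonempty_units_mulEquiv_of_card_cast_eq {k : ZMod 16} (h : (Fintype.card F : ZMod 16) = k)
    (a b c : ℕ) (hk : k ^ 4 = 1 := by decide)
    (h₁ : Fintype.card {g : C 16 × C 2 // g ^ k.val = g} = a := by decide)
    (h₂ : Fintype.card {g : C 16 × C 2 // g ^ (k ^ 2).val = g} = a + 2 * b := by decide)
    (habc : 32 = a + 2 * b + 4 * c := by decide) :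
    Nonempty ((MonoidAlgebra F (C 16 × C 2))ˣ ≃* (Fin a → C (Fintype.card F - 1)) ×
      (Fin b → C (Fintype.card F ^ 2 - 1)) × (Fin c → C (Fintype.card F ^ 4 - 1))) := by
  have hpow {m : ℕ} {l : ZMod 16} (hm : (m : ZMod 16) = l) (g : C 16 × C 2) :
      g ^ m = g ^ l.val := by
    have hg : g ^ 16 = 1 := by revert g; decide
    rw [← hm, ZMod.val_natCast, pow_eq_pow_mod m hg]
  have hcard : Nat.card (C 16 × C 2) = 2 ^ 5 := by simp
  have hcop : (Nat.card (C 16 × C 2)).Coprime (Fintype.card F) := by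
    have hunit : IsUnit (Fintype.card F : ZMod 16) := h ▸ .of_pow_eq_one hk four_ne_zero
    have hodd : Nat.Coprime 2 (Fintype.card F) :=
      ((ZMod.isUnit_iff_coprime _ 16).1 hunit).symm.coprime_dvd_left (by decide)
    exact hcard ▸ hodd.pow_left 5
  have hsq : ((Fintype.card F ^ 2 : ℕ) : ZMod 16) = k ^ 2 := by rw [Nat.cast_pow, h]
  have hfourth : ((Fintype.card F ^ 4 : ℕ) : ZMod 16) = 1 := by rw [Nat.cast_pow, h, hk]
  refine nonempty_units_mulEquiv_of_pow_card_pow_four hcop ?_ ?_ (fun g => ?_) (hcard.trans habc)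
  · simpa only [hpow h, Nat.card_eq_fintype_card] using h₁
  · simpa only [hpow hsq, Nat.card_eq_fintype_card] using h₂
  · exact (hpow hfourth g).trans (pow_one g)

end FourOrbitLengths

theorem unit_group_stmt_3 (F : Type*) [Field F] [Fintype F] (p n : ℕ)
    (hp : p.Prime) (hp2 : 2 < p) [CharP F p] (hn : 0 < n)
    (hF : Fintype.card F = p ^ n) :
    (((p ^ n : ZMod 16) = 1) →
      Nonempty ((MonoidAlgebra F (C 16 × C 2))ˣ ≃* ((Fin (32) → C (p ^ n - 1))))) ∧
    (((p ^ n : ZMod 16) = -1) →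
      Nonempty ((MonoidAlgebra F (C 16 × C 2))ˣ ≃* ((Fin (4) → C (p ^ n - 1)) × (Fin (14) → C (p ^ (2 * n) - 1))))) ∧
    ((((p ^ n : ZMod 16) = 3) ∨ ((p ^ n : ZMod 16) = -5)) →
      Nonempty ((MonoidAlgebra F (C 16 × C 2))ˣ ≃* ((Fin (4) → C (p ^ n - 1)) × (Fin (6) → C (p ^ (2 * n) - 1)) × (Fin (4) → C (p ^ (4 * n) - 1))))) ∧
    ((((p ^ n : ZMod 16) = -3) ∨ ((p ^ n : ZMod 16) = 5)) →
      Nonempty ((MonoidAlgebra F (C 16 × C 2))ˣ ≃* ((Fin (8) → C (p ^ n - 1)) × (Fin (4) → C (p ^ (2 * n) - 1)) × (Fin (4) → C (p ^ (4 * n) - 1))))) ∧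
    (((p ^ n : ZMod 16) = 7) →
      Nonempty ((MonoidAlgebra F (C 16 × C 2))ˣ ≃* ((Fin (4) → C (p ^ n - 1)) × (Fin (14) → C (p ^ (2 * n) - 1))))) ∧
    (((p ^ n : ZMod 16) = -7) →
      Nonempty ((MonoidAlgebra F (C 16 × C 2))ˣ ≃* ((Fin (16) → C (p ^ n - 1)) × (Fin (8) → C (p ^ (2 * n) - 1))))) := by
  rw [pow_mul' p 2 n, pow_mul' p 4 n, ← Nat.cast_pow, ← hF]
  refine ⟨fun h => ?_, fun h => ?_, ?_, ?_, fun h => ?_, fun h => ?_⟩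
  · obtain ⟨e⟩ := nonempty_units_mulEquiv_of_card_cast_eq h 32 0 0
    exact ⟨e.trans (.trans (.prodCongr (.refl _) .prodUnique) .prodUnique)⟩
  · obtain ⟨e⟩ := nonempty_units_mulEquiv_of_card_cast_eq h 4 14 0
    exact ⟨e.trans (.prodCongr (.refl _) .prodUnique)⟩
  · rintro (h | h) <;> exact nonempty_units_mulEquiv_of_card_cast_eq h 4 6 4
  · rintro (h | h) <;> exact nonempty_units_mulEquiv_of_card_cast_eq h 8 4 4
  · obtain ⟨e⟩ := nonempty_units_mulEquiv_of_card_cast_eq h 4 14 0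
    exact ⟨e.trans (.prodCongr (.refl _) .prodUnique)⟩
  · obtain ⟨e⟩ := nonempty_units_mulEquiv_of_card_cast_eq h 16 8 0
    exact ⟨e.trans (.prodCongr (.refl _) .prodUnique)⟩
end
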